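/- Given positive integers s < m and a field K, there exist an integer n and a squarefree monomial ideal I ⊆ S = K[x_1,…,x_n] such that ν(I) = m, g_I(k) = 1 for k = 1,…,s, and g_I(k) = 0 for k = s+1,…,m. -/

import Mathlib

open MvPolynomial

/-- The squarefree monomial `∏ i ∈ F, xᵢ`. -/
noncomputable def sqMon (K : Type) [Field K] {σ : Type} (F : Finset σ) :
    MvPolynomial σ K := ∏ i ∈ F, X i

/-- `I` is a squarefree monomial ideal if it is generated by squarefree monomials. -/
def IsSqfreeMonomialIdeal (K : Type) [Field K] {σ : Type}
    (I : Ideal (MvPolynomial σ K)) : Prop :=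
  ∃ 𝒢 : Set (Finset σ), I = Ideal.span ((sqMon K) '' 𝒢)

/-- The `k`-th squarefree power `I^[k]`: the ideal generated by all squarefree
monomials belonging to `I^k`. -/
noncomputable def sqfreePower (K : Type) [Field K] {σ : Type}
    (I : Ideal (MvPolynomial σ K)) (k : ℕ) : Ideal (MvPolynomial σ K) :=
  Ideal.span {m | ∃ F : Finset σ, m = sqMon K F ∧ m ∈ I ^ k}

/-- The monomial grade `ν(I)`: the largest `k` with `I^[k] ≠ (0)`. -/
noncomputable def monGrade (K : Type) [Field K] {σ : Type}
    (I : Ideal (MvPolynomial σ K)) : ℕ :=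
  sSup {k | sqfreePower K I k ≠ ⊥}

/-- The initial degree of a squarefree monomial ideal: the least degree of a
(squarefree) monomial belonging to it. -/
noncomputable def indeg (K : Type) [Field K] {σ : Type}
    (I : Ideal (MvPolynomial σ K)) : ℕ :=
  sInf {d | ∃ F : Finset σ, F.card = d ∧ sqMon K F ∈ I}

/-- The depth of `S/I` over the polynomial ring `S`: the longest length of a
regular sequence on `S/I` consisting of elements of the irrelevant maximal ideal. -/
noncomputable def polyDepth (K : Type) [Field K] {σ : Type}
    (I : Ideal (MvPolynomial σ K)) : ℕ :=
  sSup {k | ∃ rs : List (MvPolynomial σ K), rs.length = k ∧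
    (∀ r ∈ rs, r ∈ Ideal.span (Set.range (X : σ → MvPolynomial σ K))) ∧
    RingTheory.Sequence.IsRegular (MvPolynomial σ K ⧸ I) rs}

/-- The normalized depth function `g_I(k) = depth(S/I^[k]) - (indeg(I^[k]) - 1)`. -/
noncomputable def nDepth (K : Type) [Field K] {σ : Type}
    (I : Ideal (MvPolynomial σ K)) (k : ℕ) : ℤ :=
  (polyDepth K (sqfreePower K I k) : ℤ) - ((indeg K (sqfreePower K I k) : ℤ) - 1)

/-!
Let `s` variables have weight two and `2 (m - s)` variables have weight one, and let `I` be
generated by the squarefree monomials of weight at least two. A squarefree monomial of weight at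
least `2 k` is divisible by a product of `k` generators of `I`, so `I^[k]` is generated by the
squarefree monomials of weight at least `2 k`, and `S ⧸ I^[k]` is the Stanley–Reisner ring of the
threshold complex whose faces are the sets of weight less than `2 k`. Splitting off the vertices one
at a time, those of weight two first, with the long exact sequence of `Ext` for link and deletion
shows that its depth is the least cardinality of a facet. For `k ≤ s` both this number and the
initial degree of `I^[k]` are `k`; for `k > s` they are `2 k - 1 - s` and `2 k - s`.
-/

section ExtGrade

open CategoryTheory Abelian

universe w v u

section Abelian

variable {C : Type u} [Category.{v} C] [Abelian C] [HasExt.{w} C]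

/-- The grade of `M` with respect to `N`: the least `i` with `Ext^i(N, M) ≠ 0` is `r`. For `N` the
residue field of a local (or graded) ring this is the depth of `M`. -/
def HasExtGrade (N M : C) (r : ℕ) : Prop :=
  (∀ i < r, Subsingleton (Ext N M i)) ∧ Nontrivial (Ext N M r)

variable {N : C} {S : ShortComplex C} {r t : ℕ}

lemma eq_zero_of_comp_mk₀_eq_zero (hS : S.ShortExact)
    (h₃ : ∀ i < r, Subsingleton (Ext N S.X₃ i)) {x : Ext N S.X₁ r}
    (hx : x.comp (Ext.mk₀ S.f) (add_zero r) = 0) : x = 0 := by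
  cases r with
  | zero =>
    have := hS.mono_f
    exact (injective_iff_map_eq_zero _).1 (Ext.postcomp_mk₀_injective_of_mono N S.f) x hx
  | succ r =>
    have := h₃ r r.lt_succ_self
    obtain ⟨y, rfl⟩ := Ext.covariant_sequence_exact₁ N hS x hx rfl
    rw [Subsingleton.elim y 0, Ext.zero_comp]

namespace HasExtGrade

lemma X₂_of_le (hS : S.ShortExact) (h₁ : HasExtGrade N S.X₁ r) (h₃ : HasExtGrade N S.X₃ t)
    (hrt : r ≤ t) : HasExtGrade N S.X₂ r := by
  have h₃_van : ∀ i < r, Subsingleton (Ext N S.X₃ i) := fun i hi ↦ h₃.1 i (hi.trans_le hrt)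
  refine ⟨fun i hi ↦ ?_, ?_⟩
  · have := h₁.1 i hi
    have := h₃_van i hi
    refine subsingleton_of_forall_eq 0 fun x ↦ ?_
    obtain ⟨y, rfl⟩ := Ext.covariant_sequence_exact₂ N hS x (Subsingleton.elim _ _)
    rw [Subsingleton.elim y 0, Ext.zero_comp]
  · have := h₁.2
    obtain ⟨x, hx⟩ := exists_ne (0 : Ext N S.X₁ r)
    exact ⟨x.comp (Ext.mk₀ S.f) (add_zero r), 0, mt (eq_zero_of_comp_mk₀_eq_zero hS h₃_van) hx⟩

/-- If `M ⟶ M` is a monomorphism with cokernel `Q` that acts by zero on `Ext^i(N, M)`, then the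
long exact sequence breaks up into `0 ⟶ Ext^i(N, M) ⟶ Ext^i(N, Q) ⟶ Ext^(i+1)(N, M) ⟶ 0`. -/
lemma succ_of_cokernel {M Q : C} {f : M ⟶ M} {g : M ⟶ Q} {hfg : f ≫ g = 0}
    (hS : (ShortComplex.mk f g hfg).ShortExact)
    (hf : ∀ (i : ℕ) (x : Ext N M i), x.comp (Ext.mk₀ f) (add_zero i) = 0)
    (hQ : HasExtGrade N Q r) : HasExtGrade N M (r + 1) := by
  have hM : ∀ i < r + 1, Subsingleton (Ext N M i) := fun i hi ↦
    subsingleton_of_forall_eq 0 fun x ↦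
      eq_zero_of_comp_mk₀_eq_zero hS (fun j hj ↦ hQ.1 j (by omega)) (hf i x)
  refine ⟨hM, ?_⟩
  have := hQ.2
  have := hM r r.lt_succ_self
  obtain ⟨x, hx⟩ := exists_ne (0 : Ext N Q r)
  refine ⟨x.comp hS.extClass rfl, 0, fun h ↦ hx ?_⟩
  obtain ⟨y, rfl⟩ := Ext.covariant_sequence_exact₃ N hS x rfl h
  rw [Subsingleton.elim y 0, Ext.zero_comp]

end HasExtGrade

end Abelian

variable {R : Type u} [CommRing R] {N : ModuleCat.{u} R} {I J : Ideal R} {x : R} {r t : ℕ}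

lemma exact_quotient_colon (hJ : Submodule.comap (LinearMap.lsmul R R x) I = J) :
    Function.Exact (J.mapQ I (LinearMap.lsmul R R x) hJ.ge)
      (Submodule.factor (le_sup_left : I ≤ I ⊔ Ideal.span {x})) := by
  have h_range : (LinearMap.lsmul R R x).range = Ideal.span {x} := by
    ext y
    simp [Ideal.mem_span_singleton', mul_comm]
  rw [LinearMap.exact_iff, Submodule.factor, Submodule.ker_mapQ, Submodule.range_mapQ,
    Submodule.comap_id, Submodule.map_sup, Submodule.mkQ_map_self, bot_sup_eq, h_range]

lemma shortExact_quotient_colon (hJ : Submodule.comap (LinearMap.lsmul R R x) I = J) :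
    (ShortComplex.moduleCatMk (J.mapQ I (LinearMap.lsmul R R x) hJ.ge)
      (Submodule.factor (le_sup_left : I ≤ I ⊔ Ideal.span {x}))
      (exact_quotient_colon hJ).linearMap_comp_eq_zero).ShortExact := by
  have h_ker : (J.mapQ I (LinearMap.lsmul R R x) hJ.ge).ker = ⊥ := by
    rw [Submodule.ker_mapQ, hJ, Submodule.mkQ_map_self]
  exact ModuleCat.shortComplex_shortExact _ (exact_quotient_colon hJ)
    (LinearMap.ker_eq_bot.1 h_ker) (Submodule.factor_surjective le_sup_left)

namespace HasExtGrade

lemma zero_self [Nontrivial N] : HasExtGrade N N 0 := by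
  refine ⟨fun i hi ↦ absurd hi i.not_lt_zero, ?_⟩
  have : Nontrivial (N ⟶ N) := by
    obtain ⟨y, hy⟩ := exists_ne (0 : N)
    exact ⟨𝟙 N, 0, fun h ↦ hy congr($(h).hom y)⟩
  exact Ext.homEquiv₀.symm.injective.nontrivial

/-- The case `r ≤ t` of the depth lemma for `0 ⟶ R ⧸ (I : x) ⟶ R ⧸ I ⟶ R ⧸ (I, x) ⟶ 0`. -/
lemma quotient_of_colon
    (h_colon : HasExtGrade N (ModuleCat.of R (R ⧸ Submodule.comap (LinearMap.lsmul R R x) I)) r)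
    (h_sup : HasExtGrade N (ModuleCat.of R (R ⧸ I ⊔ Ideal.span {x})) t) (hrt : r ≤ t) :
    HasExtGrade N (ModuleCat.of R (R ⧸ I)) r :=
  X₂_of_le (shortExact_quotient_colon rfl) h_colon h_sup hrt

lemma quotient_of_isSMulRegular (hxN : x ∈ Module.annihilator R N) (hxI : IsSMulRegular (R ⧸ I) x)
    (h : HasExtGrade N (ModuleCat.of R (R ⧸ I ⊔ Ideal.span {x})) r) :
    HasExtGrade N (ModuleCat.of R (R ⧸ I)) (r + 1) := by
  have hI := (isSMulRegular_on_quot_iff_lsmul_comap_eq I x).1 hxI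
  refine succ_of_cokernel (shortExact_quotient_colon hI) (fun i y ↦ ?_) h
  have h_smul : ModuleCat.ofHom (I.mapQ I (LinearMap.lsmul R R x) hI.ge) =
      x • 𝟙 (ModuleCat.of R (R ⧸ I)) := by
    ext
    rfl
  rw [h_smul]
  exact congr($(Ext.postcomp_smul_id_eq_zero_of_mem_annihilator
    (M := ModuleCat.of R (R ⧸ I)) hxN i).hom y)

/-- Rees' theorem. -/
lemma isGreatest_length [IsNoetherianRing R] {M : ModuleCat.{u} R} [Module.Finite R M]
    (hM : I • (⊤ : Submodule R M) < ⊤) (h : HasExtGrade (ModuleCat.of R (R ⧸ I)) M r) :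
    IsGreatest {k | ∃ rs : List R, rs.length = k ∧ (∀ a ∈ rs, a ∈ I) ∧
      RingTheory.Sequence.IsRegular M rs} r := by
  have h_supp : Module.support R (ModuleCat.of R (R ⧸ I)) = PrimeSpectrum.zeroLocus I := by
    rw [Module.support_eq_zeroLocus, Ideal.annihilator_quotient]
  refine ⟨ModuleCat.exists_isRegular_of_exists_subsingleton_ext I r M hM _ h_supp h.1, ?_⟩
  rintro _ ⟨rs, rfl, h_mem, h_reg⟩
  by_contra! hr
  exact not_subsingleton_iff_nontrivial.2 h.2
    (ModuleCat.subsingleton_ext_of_exists_isRegular I _ h_supp.subset M hM rs h_mem h_reg r hr)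

end HasExtGrade

lemma smul_top_quotient_lt_top (hJI : J ≤ I) (hI : I ≠ ⊤) :
    I • (⊤ : Submodule R (R ⧸ J)) < ⊤ := by
  rw [lt_top_iff_ne_top, Ideal.smul_top_eq_map, ne_eq, Submodule.restrictScalars_eq_top_iff,
    Ideal.Quotient.algebraMap_eq, Ideal.map_eq_top_iff_of_ker_le _ (by simpa using hJI)
      ((Ideal.Quotient.mk J).isIntegral_of_surjective Ideal.Quotient.mk_surjective)]
  exact hI

end ExtGrade

section SqMonIdeal

variable (K : Type) [Field K] {σ : Type}

/-- The ideal generated by the squarefree monomials with support in `U`. When `U` is an upper set,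
this is the Stanley–Reisner ideal of the simplicial complex with set of nonfaces `U`. -/
noncomputable def sqMonIdeal (U : Set (Finset σ)) : Ideal (MvPolynomial σ K) :=
  Ideal.span (sqMon K '' U)

lemma isSqfreeMonomialIdeal_sqMonIdeal (U : Set (Finset σ)) :
    IsSqfreeMonomialIdeal K (sqMonIdeal K U) :=
  ⟨U, rfl⟩

lemma sqMon_singleton (v : σ) : sqMon K {v} = X v :=
  Finset.prod_singleton _ _

lemma sqMon_eq_monomial (F : Finset σ) : sqMon K F = monomial (∑ i ∈ F, Finsupp.single i 1) 1 :=
  (monomial_sum_one F _).symm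

variable {K} {U : Set (Finset σ)}

lemma sqMon_mem_sqMonIdeal {F : Finset σ} (hF : F ∈ U) : sqMon K F ∈ sqMonIdeal K U :=
  Ideal.subset_span ⟨F, hF, rfl⟩

lemma mem_sqMonIdeal_iff_exists_subset {p : MvPolynomial σ K} :
    p ∈ sqMonIdeal K U ↔ ∀ m ∈ p.support, ∃ F ∈ U, F ⊆ m.support := by
  classical
  have h_le (F : Finset σ) (m : σ →₀ ℕ) : ∑ i ∈ F, Finsupp.single i 1 ≤ m ↔ F ⊆ m.support := by
    simp only [Finsupp.le_def, Finsupp.finsetSum_apply, Finsupp.single_apply,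
      Finset.sum_ite_eq', Finset.subset_iff, Finsupp.mem_support_iff]
    exact forall_congr' fun i ↦ by split_ifs with h <;> simp [h, Nat.one_le_iff_ne_zero]
  have h_image : sqMon K '' U =
      (fun m ↦ monomial m (1 : K)) '' ((fun F ↦ ∑ i ∈ F, Finsupp.single i 1) '' U) := by
    simp only [Set.image_image, ← sqMon_eq_monomial]
  simp only [sqMonIdeal, h_image, mem_ideal_span_monomial_image, Set.exists_mem_image, h_le]

lemma mem_sqMonIdeal (hU : IsUpperSet U) {p : MvPolynomial σ K} :
    p ∈ sqMonIdeal K U ↔ ∀ m ∈ p.support, m.support ∈ U :=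
  mem_sqMonIdeal_iff_exists_subset.trans <| forall₂_congr fun _ _ ↦
    ⟨fun ⟨_, hF, h_sub⟩ ↦ hU h_sub hF, fun h ↦ ⟨_, h, subset_rfl⟩⟩

lemma sqMon_mem_sqMonIdeal_iff (hU : IsUpperSet U) {F : Finset σ} :
    sqMon K F ∈ sqMonIdeal K U ↔ F ∈ U := by
  classical
  have h_supp : (∑ i ∈ F, Finsupp.single i 1).support = F := by
    ext j
    simp [Finsupp.finsetSum_apply, Finsupp.single_apply]
  rw [mem_sqMonIdeal hU, sqMon_eq_monomial, support_monomial, if_neg one_ne_zero]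
  simp [h_supp]

lemma sqMonIdeal_ne_bot_iff : sqMonIdeal K U ≠ ⊥ ↔ U.Nonempty := by
  have h_ne (F : Finset σ) : sqMon K F ≠ 0 := Finset.prod_ne_zero_iff.2 fun i _ ↦ X_ne_zero i
  simp [sqMonIdeal, h_ne, Set.Nonempty]

lemma sqMonIdeal_le_idealOfVars (hU : ∅ ∉ U) : sqMonIdeal K U ≤ idealOfVars σ K := by
  refine Ideal.span_le.2 ?_
  rintro _ ⟨F, hF, rfl⟩
  obtain ⟨i, hi⟩ := Finset.nonempty_iff_ne_empty.2 (ne_of_mem_of_not_mem hF hU)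
  exact Ideal.mem_of_dvd _ (Finset.dvd_prod_of_mem _ hi) (Ideal.subset_span ⟨i, rfl⟩)

lemma sqMonIdeal_not_subset_empty : sqMonIdeal K {F : Finset σ | ¬F ⊆ ∅} = idealOfVars σ K := by
  refine le_antisymm (sqMonIdeal_le_idealOfVars (by simp)) (Ideal.span_le.2 ?_)
  rintro _ ⟨i, rfl⟩
  rw [← sqMon_singleton]
  exact sqMon_mem_sqMonIdeal (by simp)

lemma sqMonIdeal_sup_span_X (v : σ) :
    sqMonIdeal K U ⊔ Ideal.span {X v} = sqMonIdeal K (U ∪ {F | v ∈ F}) := by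
  apply le_antisymm
  · refine sup_le (Ideal.span_mono (Set.image_mono Set.subset_union_left)) ?_
    rw [Ideal.span_singleton_le_iff_mem, ← sqMon_singleton]
    exact sqMon_mem_sqMonIdeal (Or.inr (Finset.mem_singleton_self v))
  · refine Ideal.span_le.2 ?_
    rintro _ ⟨F, hF | hF, rfl⟩
    · exact Ideal.mem_sup_left (sqMon_mem_sqMonIdeal hF)
    · exact Ideal.mem_sup_right (Ideal.mem_span_singleton.2 (Finset.dvd_prod_of_mem _ hF))

lemma comap_lsmul_X_sqMonIdeal [DecidableEq σ] (hU : IsUpperSet U) (v : σ) :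
    Submodule.comap (LinearMap.lsmul _ _ (X v)) (sqMonIdeal K U) =
      sqMonIdeal K {F | insert v F ∈ U} := by
  have h_supp (m : σ →₀ ℕ) : (Finsupp.single v 1 + m).support = insert v m.support := by
    ext i
    by_cases h : i = v <;> simp [h]
  have h_upper : IsUpperSet {F | insert v F ∈ U} :=
    fun F G hFG hF ↦ hU (Finset.insert_subset_insert v hFG) hF
  ext p
  rw [Submodule.mem_comap, LinearMap.lsmul_apply, smul_eq_mul, mem_sqMonIdeal hU,
    mem_sqMonIdeal h_upper, support_X_mul]
  simp only [Finset.forall_mem_map, addLeftEmbedding_apply, h_supp, Set.mem_ofPred_eq]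

lemma sqfreePower_eq_sqMonIdeal (I : Ideal (MvPolynomial σ K)) (k : ℕ) :
    sqfreePower K I k = sqMonIdeal K {F | sqMon K F ∈ I ^ k} := by
  refine congrArg Ideal.span (Set.ext fun p ↦ ⟨?_, ?_⟩)
  · rintro ⟨F, rfl, hF⟩
    exact ⟨F, hF, rfl⟩
  · rintro ⟨F, hF, rfl⟩
    exact ⟨F, rfl, hF⟩

end SqMonIdeal

section HasDepth

variable (K : Type) [Field K] {σ : Type}

/-- The depth of `S ⧸ I` at the origin, expressed as the grade with respect to the residue field
`S ⧸ (x₁, …, xₙ)`, which is better suited than `polyDepth` to inductive computations. -/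
def HasDepth (I : Ideal (MvPolynomial σ K)) (r : ℕ) : Prop :=
  HasExtGrade (ModuleCat.of (MvPolynomial σ K) (MvPolynomial σ K ⧸ idealOfVars σ K))
    (ModuleCat.of (MvPolynomial σ K) (MvPolynomial σ K ⧸ I)) r

lemma idealOfVars_ne_top : idealOfVars σ K ≠ ⊤ := by
  intro h
  have h_one : (1 : MvPolynomial σ K) ∈ idealOfVars σ K ^ 1 := by simp [h]
  simpa using (mem_pow_idealOfVars_iff 1 _).1 h_one 0

variable {K} {U : Set (Finset σ)} {v : σ} {r t : ℕ}

namespace HasDepth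

lemma polyDepth_eq [Finite σ] {I : Ideal (MvPolynomial σ K)} (hI : I ≤ idealOfVars σ K)
    (h : HasDepth K I r) : polyDepth K I = r :=
  (HasExtGrade.isGreatest_length (M := ModuleCat.of _ (MvPolynomial σ K ⧸ I))
    (smul_top_quotient_lt_top hI (idealOfVars_ne_top K)) h).csSup_eq

protected lemma idealOfVars : HasDepth K (idealOfVars σ K) 0 :=
  have : Nontrivial (MvPolynomial σ K ⧸ idealOfVars σ K) :=
    Ideal.Quotient.nontrivial_iff.2 (idealOfVars_ne_top K)
  HasExtGrade.zero_self

lemma of_link_of_deletion [DecidableEq σ] (hU : IsUpperSet U)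
    (h_link : HasDepth K (sqMonIdeal K {F | insert v F ∈ U}) r)
    (h_del : HasDepth K (sqMonIdeal K (U ∪ {F | v ∈ F})) t) (hrt : r ≤ t) :
    HasDepth K (sqMonIdeal K U) r := by
  rw [← comap_lsmul_X_sqMonIdeal hU] at h_link
  rw [← sqMonIdeal_sup_span_X] at h_del
  exact HasExtGrade.quotient_of_colon h_link h_del hrt

lemma succ_of_cone [DecidableEq σ] (hU : IsUpperSet U) (hv : ∀ F, insert v F ∈ U → F ∈ U)
    (h_del : HasDepth K (sqMonIdeal K (U ∪ {F | v ∈ F})) r) :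
    HasDepth K (sqMonIdeal K U) (r + 1) := by
  have h_link : {F | insert v F ∈ U} = U :=
    Set.ext fun F ↦ ⟨hv F, fun hF ↦ hU (Finset.subset_insert v F) hF⟩
  rw [← sqMonIdeal_sup_span_X] at h_del
  refine HasExtGrade.quotient_of_isSMulRegular ?_ ?_ h_del
  · rw [Ideal.annihilator_quotient]
    exact Ideal.subset_span ⟨v, rfl⟩
  · rw [isSMulRegular_on_quot_iff_lsmul_comap_eq, comap_lsmul_X_sqMonIdeal hU, h_link]

lemma simplex (Y : Finset σ) : HasDepth K (sqMonIdeal K {F | ¬F ⊆ Y}) Y.card := by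
  classical
  induction Y using Finset.induction_on with
  | empty =>
    rw [sqMonIdeal_not_subset_empty]
    exact HasDepth.idealOfVars
  | insert v Y hv ih =>
    rw [Finset.card_insert_of_notMem hv]
    refine succ_of_cone (v := v) (fun F G hFG hF hG ↦ hF (hFG.trans hG)) (fun F hF hFY ↦ hF ?_) ?_
    · exact Finset.insert_subset (Finset.mem_insert_self v Y) hFY
    · have h_del : {F | ¬F ⊆ insert v Y} ∪ {F | v ∈ F} = {F | ¬F ⊆ Y} := by
        ext F
        by_cases hvF : v ∈ F
        · simpa [hvF] using fun h : F ⊆ Y ↦ hv (h hvF)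
        · simp [hvF, Finset.subset_insert_iff_of_notMem hvF]
      rwa [h_del]

end HasDepth

end HasDepth

section Threshold

variable {σ : Type} {V : Finset σ} {w : σ → ℕ}

lemma sum_eq_card_add_card_filter_eq_two (hw : ∀ i ∈ V, w i = 1 ∨ w i = 2) :
    ∑ i ∈ V, w i = V.card + (V.filter (w · = 2)).card := by
  rw [Finset.card_eq_sum_ones, Finset.card_filter, ← Finset.sum_add_distrib]
  refine Finset.sum_congr rfl fun i hi ↦ ?_
  obtain h | h := hw i hi <;> simp [h]

variable [DecidableEq σ]

/-- The nonfaces of the threshold complex on the vertex set `Y` whose faces are the sets of weight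
at most `c`. Only vertices in `V` carry a weight, the others are cone points. -/
def thresholdNonfaces (Y V : Finset σ) (w : σ → ℕ) (c : ℕ) : Set (Finset σ) :=
  {F | F ⊆ Y → c < ∑ i ∈ F ∩ V, w i}

variable {Y : Finset σ} {c : ℕ} {v : σ}

lemma isUpperSet_thresholdNonfaces : IsUpperSet (thresholdNonfaces Y V w c) :=
  fun _ _ hFG hF hG ↦ (hF (hFG.trans hG)).trans_le
    (Finset.sum_le_sum_of_subset (Finset.inter_subset_inter_right hFG))

lemma thresholdNonfaces_of_sum_le (hc : ∑ i ∈ V, w i ≤ c) :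
    thresholdNonfaces Y V w c = {F | ¬F ⊆ Y} :=
  Set.ext fun _ ↦ imp_congr_right fun _ ↦ iff_false_intro
    ((Finset.sum_le_sum_of_subset Finset.inter_subset_right).trans hc).not_gt

lemma setOf_insert_mem_thresholdNonfaces (hv : v ∈ V) (hVY : V ⊆ Y) :
    {F | insert v F ∈ thresholdNonfaces Y V w (c + w v)} =
      thresholdNonfaces Y (V.erase v) w c := by
  ext F
  have h_inter : insert v F ∩ V = insert v (F ∩ V.erase v) := by grind
  have hvF : v ∉ F ∩ V.erase v := by simp
  simp only [thresholdNonfaces, Set.mem_ofPred_eq, Finset.insert_subset_iff, hVY hv, true_and,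
    h_inter, Finset.sum_insert hvF]
  exact imp_congr_right fun _ ↦ by omega

lemma thresholdNonfaces_union_setOf_mem :
    thresholdNonfaces Y V w c ∪ {F | v ∈ F} =
      thresholdNonfaces (Y.erase v) (V.erase v) w c := by
  ext F
  by_cases hvF : v ∈ F
  · simp [thresholdNonfaces, hvF, Finset.subset_erase]
  · have h_inter : F ∩ V.erase v = F ∩ V := by grind
    simp [thresholdNonfaces, hvF, Finset.subset_erase, h_inter]

lemma thresholdNonfaces_of_lt (hv : v ∈ V) (hc : c < w v) :
    thresholdNonfaces Y V w c = thresholdNonfaces (Y.erase v) (V.erase v) w c := by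
  rw [← thresholdNonfaces_union_setOf_mem, eq_comm, Set.union_eq_left]
  exact fun F hvF _ ↦ hc.trans_le (Finset.single_le_sum_of_canonicallyOrdered
    (Finset.mem_inter.2 ⟨hvF, hv⟩))

lemma empty_notMem_thresholdNonfaces : ∅ ∉ thresholdNonfaces Y V w c := by
  simp [thresholdNonfaces]

end Threshold

section MinFacetCard

/-- The least cardinality of a maximal set of weight at most `c` among `p` elements of weight two
and `q` elements of weight one: if not everything fits, one takes as many elements of weight two as
possible, and fills up with elements of weight one. -/
def minFacetCard (p q c : ℕ) : ℕ := min (p + q) (max (c - p) ((c + min 1 q) / 2))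

lemma minFacetCard_of_le {p q c : ℕ} (h : 2 * p + q ≤ c) : minFacetCard p q c = p + q := by
  unfold minFacetCard; omega

lemma minFacetCard_zero_left (q c : ℕ) : minFacetCard 0 q c = min q c := by
  unfold minFacetCard; omega

lemma minFacetCard_succ_of_lt {c : ℕ} (p q : ℕ) (hc : c < 2) :
    minFacetCard (p + 1) q c = minFacetCard p q c := by
  unfold minFacetCard; omega

lemma minFacetCard_succ_add_two (p q c : ℕ) :
    minFacetCard (p + 1) q (c + 2) = minFacetCard p q c + 1 := by
  unfold minFacetCard; omega

lemma minFacetCard_succ_le {p q c : ℕ} (h : c < 2 * (p + 1) + q) :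
    minFacetCard (p + 1) q c ≤ minFacetCard p q c := by
  unfold minFacetCard; omega

end MinFacetCard

section ThresholdDepth

variable {K : Type} [Field K] {σ : Type} [DecidableEq σ] {Y V : Finset σ} {w : σ → ℕ}
  {c p q : ℕ} {v : σ}

lemma erase_sdiff_erase_of_mem (hv : v ∈ V) : Y.erase v \ V.erase v = Y \ V := by
  grind

namespace HasDepth

lemma thresholdNonfaces_of_sum_le (hVY : V ⊆ Y) (hc : ∑ i ∈ V, w i ≤ c) :
    HasDepth K (sqMonIdeal K (thresholdNonfaces Y V w c)) ((Y \ V).card + V.card) := by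
  rw [_root_.thresholdNonfaces_of_sum_le hc, Finset.card_sdiff_add_card_eq_card hVY]
  exact simplex Y

lemma thresholdNonfaces_of_lt {r : ℕ} (hv : v ∈ V) (hc : c < w v)
    (h_del : HasDepth K (sqMonIdeal K (thresholdNonfaces (Y.erase v) (V.erase v) w c))
      ((Y.erase v \ V.erase v).card + r)) :
    HasDepth K (sqMonIdeal K (thresholdNonfaces Y V w c)) ((Y \ V).card + r) := by
  rw [erase_sdiff_erase_of_mem hv] at h_del
  rwa [_root_.thresholdNonfaces_of_lt hv hc]

lemma thresholdNonfaces_of_link_of_deletion {d r t : ℕ} (hv : v ∈ V) (hVY : V ⊆ Y)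
    (hd : d = c + w v)
    (h_link : HasDepth K (sqMonIdeal K (thresholdNonfaces Y (V.erase v) w c))
      ((Y \ V.erase v).card + r))
    (h_del : HasDepth K (sqMonIdeal K (thresholdNonfaces (Y.erase v) (V.erase v) w d))
      ((Y.erase v \ V.erase v).card + t)) (hrt : r + 1 ≤ t) :
    HasDepth K (sqMonIdeal K (thresholdNonfaces Y V w d)) ((Y \ V).card + (r + 1)) := by
  have h_card : (Y \ V.erase v).card + r = (Y \ V).card + (r + 1) := by
    rw [Finset.sdiff_erase (hVY hv), Finset.card_insert_of_notMem (by simp [hv])]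
    omega
  rw [← setOf_insert_mem_thresholdNonfaces hv hVY, h_card, ← hd] at h_link
  rw [← thresholdNonfaces_union_setOf_mem, erase_sdiff_erase_of_mem hv] at h_del
  exact of_link_of_deletion isUpperSet_thresholdNonfaces h_link h_del (by omega)

lemma thresholdNonfaces_of_forall_eq_one (c : ℕ) (hVY : V ⊆ Y) (hw : ∀ i ∈ V, w i = 1) :
    HasDepth K (sqMonIdeal K (thresholdNonfaces Y V w c)) ((Y \ V).card + min V.card c) := by
  induction hn : V.card generalizing V Y c with
  | zero =>
    obtain rfl := Finset.card_eq_zero.1 hn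
    simpa using thresholdNonfaces_of_sum_le (c := c) hVY (by simp)
  | succ n ih =>
    obtain ⟨v, hv⟩ : V.Nonempty := Finset.card_pos.1 (by omega)
    have h_card : (V.erase v).card = n := by rw [Finset.card_erase_of_mem hv, hn, n.add_sub_cancel]
    have hw' : ∀ i ∈ V.erase v, w i = 1 := fun i hi ↦ hw i (Finset.mem_of_mem_erase hi)
    have h_del (c : ℕ) := ih c (Finset.erase_subset_erase v hVY) hw' h_card
    obtain h_le | h_lt := le_or_gt (n + 1) c
    · have h_sum : ∑ i ∈ V, w i = n + 1 := by rw [Finset.sum_congr rfl hw, ← hn]; simp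
      rw [min_eq_left h_le, ← hn]
      exact thresholdNonfaces_of_sum_le hVY (h_sum.trans_le h_le)
    cases c with
    | zero => simpa using thresholdNonfaces_of_lt hv (by simp [hw v hv]) (h_del 0)
    | succ c =>
      have h_link := ih c ((Finset.erase_subset v V).trans hVY) hw' h_card
      rw [Nat.add_min_add_right]
      exact thresholdNonfaces_of_link_of_deletion hv hVY (by rw [hw v hv]) h_link (h_del (c + 1))
        (by omega)

lemma thresholdNonfaces_minFacetCard (c : ℕ) (hVY : V ⊆ Y) (hw : ∀ i ∈ V, w i = 1 ∨ w i = 2)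
    (h_card : V.card = p + q) (h_sum : ∑ i ∈ V, w i = 2 * p + q) :
    HasDepth K (sqMonIdeal K (thresholdNonfaces Y V w c))
      ((Y \ V).card + minFacetCard p q c) := by
  have h_two := sum_eq_card_add_card_filter_eq_two hw
  induction p generalizing V Y c with
  | zero =>
    have h_empty : V.filter (w · = 2) = ∅ := Finset.card_eq_zero.1 (by omega)
    have h_one : ∀ i ∈ V, w i = 1 := fun i hi ↦
      (hw i hi).resolve_right (Finset.filter_eq_empty_iff.1 h_empty hi)
    rw [minFacetCard_zero_left, ← q.zero_add, ← h_card]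
    exact thresholdNonfaces_of_forall_eq_one c hVY h_one
  | succ p ih =>
    obtain ⟨v, hv₂⟩ : (V.filter (w · = 2)).Nonempty := Finset.card_pos.1 (by omega)
    obtain ⟨hv, hwv⟩ := Finset.mem_filter.1 hv₂
    have hw' : ∀ i ∈ V.erase v, w i = 1 ∨ w i = 2 := fun i hi ↦ hw i (Finset.mem_of_mem_erase hi)
    have h_card' : (V.erase v).card = p + q := by
      have := Finset.card_erase_add_one hv
      omega
    have h_sum' : ∑ i ∈ V.erase v, w i = 2 * p + q := by
      have := Finset.sum_erase_add V w hv
      omega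
    have h_two' := sum_eq_card_add_card_filter_eq_two hw'
    have h_del (c : ℕ) := ih c (Finset.erase_subset_erase v hVY) hw' h_card' h_sum' h_two'
    obtain h_le | h_lt := le_or_gt (2 * (p + 1) + q) c
    · rw [minFacetCard_of_le h_le, ← h_card]
      exact thresholdNonfaces_of_sum_le hVY (h_sum.trans_le h_le)
    match c with
    | 0 | 1 =>
      rw [minFacetCard_succ_of_lt _ _ (by omega)]
      exact thresholdNonfaces_of_lt hv (by omega) (h_del _)
    | c + 2 =>
      have h_link := ih c ((Finset.erase_subset v V).trans hVY) hw' h_card' h_sum' h_two'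
      have h_le := minFacetCard_succ_le h_lt
      rw [minFacetCard_succ_add_two] at h_le ⊢
      exact thresholdNonfaces_of_link_of_deletion hv hVY (by rw [hwv]) h_link (h_del (c + 2)) h_le

end HasDepth

end ThresholdDepth

section WeightIdeal

variable (K : Type) [Field K] {σ : Type} (w : σ → ℕ) (d k : ℕ)

/-- The ideal generated by the squarefree monomials of weight at least `d`, where the variable `xᵢ`
has weight `w i`. -/
noncomputable def weightIdeal : Ideal (MvPolynomial σ K) :=
  sqMonIdeal K {F | d ≤ ∑ i ∈ F, w i}

variable {w d k}

lemma sqMon_mem_weightIdeal_iff {F : Finset σ} :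
    sqMon K F ∈ weightIdeal K w d ↔ d ≤ ∑ i ∈ F, w i :=
  sqMon_mem_sqMonIdeal_iff fun _ _ hFG hF ↦
    Set.mem_ofPred.2 ((Set.mem_ofPred.1 hF).trans (Finset.sum_le_sum_of_subset hFG))

lemma weightIdeal_ne_bot_iff [Fintype σ] : weightIdeal K w d ≠ ⊥ ↔ d ≤ ∑ i, w i :=
  sqMonIdeal_ne_bot_iff.trans
    ⟨fun ⟨F, hF⟩ ↦ hF.trans (Finset.sum_le_sum_of_subset F.subset_univ), fun h ↦ ⟨_, h⟩⟩

variable {K}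

lemma mul_le_sum_of_sqMon_mem_weightIdeal_pow {F : Finset σ}
    (hF : sqMon K F ∈ weightIdeal K w d ^ k) : d * k ≤ ∑ i ∈ F, w i := by
  let φ : MvPolynomial σ K →ₐ[K] Polynomial K := aeval fun i ↦ Polynomial.X ^ w i
  have hφ (G : Finset σ) : φ (sqMon K G) = Polynomial.X ^ ∑ i ∈ G, w i := by
    simp [φ, sqMon, Finset.prod_pow_eq_pow_sum]
  have h_le : weightIdeal K w d ≤ (Ideal.span {Polynomial.X ^ d}).comap φ := by
    refine Ideal.span_le.2 ?_
    rintro _ ⟨G, hG, rfl⟩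
    rw [SetLike.mem_coe, Ideal.mem_comap, hφ, Ideal.mem_span_singleton]
    exact pow_dvd_pow _ hG
  have h_mem := (Ideal.pow_right_mono h_le k).trans (Ideal.le_comap_pow φ k) hF
  rw [Ideal.mem_comap, hφ, Ideal.span_singleton_pow, Ideal.mem_span_singleton, ← pow_mul] at h_mem
  exact (pow_dvd_pow_iff Polynomial.X_ne_zero Polynomial.not_isUnit_X).1 h_mem

lemma exists_subset_sum_eq_of_eq_one_or_eq (hw : ∀ i, w i = 1 ∨ w i = d) {F : Finset σ}
    (hF : d ≤ ∑ i ∈ F, w i) : ∃ G ⊆ F, ∑ i ∈ G, w i = d := by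
  by_cases! h : ∃ i ∈ F, w i = d
  · obtain ⟨i, hi, hwi⟩ := h
    exact ⟨{i}, Finset.singleton_subset_iff.2 hi, by rwa [Finset.sum_singleton]⟩
  · have h_sum {G : Finset σ} (hG : G ⊆ F) : ∑ i ∈ G, w i = G.card := by
      rw [Finset.card_eq_sum_ones]
      exact Finset.sum_congr rfl fun i hi ↦ (hw i).resolve_right (h i (hG hi))
    obtain ⟨G, hG, h_card⟩ := Finset.exists_subset_card_eq (hF.trans_eq (h_sum subset_rfl))
    exact ⟨G, hG, (h_sum hG).trans h_card⟩

lemma sqMon_mem_weightIdeal_pow (hw : ∀ i, w i = 1 ∨ w i = d) {F : Finset σ}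
    (hF : d * k ≤ ∑ i ∈ F, w i) : sqMon K F ∈ weightIdeal K w d ^ k := by
  classical
  induction k generalizing F with
  | zero => simp
  | succ k ih =>
    rw [mul_add_one] at hF
    obtain ⟨G, hGF, hG⟩ := exists_subset_sum_eq_of_eq_one_or_eq hw (le_of_add_le_right hF)
    have h_sum := Finset.sum_sdiff (f := w) hGF
    have h_prod : sqMon K (F \ G) * sqMon K G = sqMon K F := Finset.prod_sdiff hGF
    rw [pow_succ, ← h_prod]
    exact Ideal.mul_mem_mul (ih (by omega)) ((sqMon_mem_weightIdeal_iff K).2 hG.ge)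

variable (K)

lemma sqfreePower_weightIdeal (hw : ∀ i, w i = 1 ∨ w i = d) :
    sqfreePower K (weightIdeal K w d) k = weightIdeal K w (d * k) := by
  rw [sqfreePower_eq_sqMonIdeal]
  exact congrArg (sqMonIdeal K) <| Set.ext fun _ ↦
    ⟨mul_le_sum_of_sqMon_mem_weightIdeal_pow, sqMon_mem_weightIdeal_pow hw⟩

lemma monGrade_weightIdeal [Fintype σ] (hd : 0 < d) (hw : ∀ i, w i = 1 ∨ w i = d) :
    monGrade K (weightIdeal K w d) = (∑ i, w i) / d := by
  have h_set : {k | sqfreePower K (weightIdeal K w d) k ≠ ⊥} = Set.Iic ((∑ i, w i) / d) := by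
    ext k
    rw [Set.mem_ofPred_eq, sqfreePower_weightIdeal K hw, weightIdeal_ne_bot_iff, Set.mem_Iic,
      Nat.le_div_iff_mul_le hd, mul_comm]
  rw [monGrade, h_set, csSup_Iic]

variable [Fintype σ] {p q : ℕ}

lemma exists_card_eq_and_sum_eq (hw : ∀ i, w i = 1 ∨ w i = 2) (h_card : Fintype.card σ = p + q)
    (h_sum : ∑ i, w i = 2 * p + q) {e : ℕ} (he : e ≤ p + q) :
    ∃ F : Finset σ, F.card = e ∧ ∑ i ∈ F, w i = e + min e p := by
  have h_weight (F : Finset σ) := sum_eq_card_add_card_filter_eq_two (V := F) fun i _ ↦ hw i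
  let H := Finset.univ.filter (w · = 2)
  have hH : H.card = p := by
    have : ∑ i, w i = Fintype.card σ + H.card := h_weight Finset.univ
    omega
  obtain h_le | h_le := le_total e p
  · obtain ⟨F, hFH, rfl⟩ := Finset.exists_subset_card_eq (hH.symm ▸ h_le)
    have h_two : F.filter (w · = 2) = F :=
      Finset.filter_eq_self.2 fun i hi ↦ (Finset.mem_filter.1 (hFH hi)).2
    exact ⟨F, rfl, by rw [h_weight, h_two, min_eq_left h_le]⟩
  · obtain ⟨F, hHF, -, rfl⟩ := Finset.exists_subsuperset_card_eq H.subset_univ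
      (hH.trans_le h_le) (he.trans_eq (h_card.symm.trans Finset.card_univ.symm))
    have h_two : F.filter (w · = 2) = H :=
      (Finset.filter_subset_filter _ F.subset_univ).antisymm fun i hi ↦
        Finset.mem_filter.2 ⟨hHF hi, (Finset.mem_filter.1 hi).2⟩
    exact ⟨F, rfl, by rw [h_weight, h_two, min_eq_right h_le, hH]⟩

lemma indeg_weightIdeal (hw : ∀ i, w i = 1 ∨ w i = 2) (h_card : Fintype.card σ = p + q)
    (h_sum : ∑ i, w i = 2 * p + q) (hd : d ≤ 2 * p + q) :
    indeg K (weightIdeal K w d) = max ((d + 1) / 2) (d - p) := by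
  have h_weight (F : Finset σ) := sum_eq_card_add_card_filter_eq_two (V := F) fun i _ ↦ hw i
  simp only [indeg, sqMon_mem_weightIdeal_iff]
  refine IsLeast.csInf_eq ⟨?_, ?_⟩
  · obtain ⟨F, hF, hF_sum⟩ := exists_card_eq_and_sum_eq hw h_card h_sum
      (e := max ((d + 1) / 2) (d - p)) (by omega)
    exact ⟨F, hF, by omega⟩
  · rintro _ ⟨F, rfl, hF⟩
    have h_le_card : (F.filter (w · = 2)).card ≤ F.card := Finset.card_filter_le F _
    have h_le_univ : (F.filter (w · = 2)).card ≤ (Finset.univ.filter (w · = 2)).card :=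
      Finset.card_le_card (Finset.filter_subset_filter _ F.subset_univ)
    have h_univ := h_weight Finset.univ
    rw [Finset.card_univ] at h_univ
    have := h_weight F
    omega

lemma polyDepth_weightIdeal_add_one (hw : ∀ i, w i = 1 ∨ w i = 2)
    (h_card : Fintype.card σ = p + q) (h_sum : ∑ i, w i = 2 * p + q) (c : ℕ) :
    polyDepth K (weightIdeal K w (c + 1)) = minFacetCard p q c := by
  classical
  have h_ideal : weightIdeal K w (c + 1) =
      sqMonIdeal K (thresholdNonfaces Finset.univ Finset.univ w c) := by
    simp [weightIdeal, thresholdNonfaces]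
  have h_depth := HasDepth.thresholdNonfaces_minFacetCard (K := K) c Finset.univ.subset_univ
    (fun i _ ↦ hw i) h_card h_sum
  rw [Finset.sdiff_self, Finset.card_empty, zero_add] at h_depth
  rw [h_ideal]
  exact h_depth.polyDepth_eq (sqMonIdeal_le_idealOfVars empty_notMem_thresholdNonfaces)

lemma nDepth_weightIdeal_two (hw : ∀ i, w i = 1 ∨ w i = 2) (h_card : Fintype.card σ = p + q)
    (h_sum : ∑ i, w i = 2 * p + q) (hq : 1 ≤ q) (hk : 1 ≤ k) (hkpq : 2 * k ≤ 2 * p + q) :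
    nDepth K (weightIdeal K w 2) k = if k ≤ p then 1 else 0 := by
  obtain ⟨k, rfl⟩ := Nat.exists_eq_add_of_le' hk
  have h_depth := polyDepth_weightIdeal_add_one K hw h_card h_sum (2 * k + 1)
  have h_indeg := indeg_weightIdeal K hw h_card h_sum hkpq
  rw [nDepth, sqfreePower_weightIdeal K hw, h_indeg, mul_add_one, h_depth, minFacetCard]
  split_ifs <;> omega

end WeightIdeal

/-- **Lemma 4.2.** Given positive integers `s < m`, there exists a squarefree monomial
ideal `I ⊆ K[x₁,…,xₙ]` such that `ν(I) = m`, `g_I(k) = 1` for `k = 1,…,s` and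
`g_I(k) = 0` for `k = s+1,…,m`. -/
theorem exists_sqfree_ideal_step_normalized_depth (K : Type) [Field K]
    (s m : ℕ) (hs : 1 ≤ s) (hsm : s < m) :
    ∃ (n : ℕ) (I : Ideal (MvPolynomial (Fin n) K)),
      IsSqfreeMonomialIdeal K I ∧ monGrade K I = m ∧
      (∀ k : ℕ, 1 ≤ k → k ≤ s → nDepth K I k = 1) ∧
      (∀ k : ℕ, s + 1 ≤ k → k ≤ m → nDepth K I k = 0) := by
  obtain ⟨t, rfl⟩ := Nat.exists_eq_add_of_le hsm.le
  let w : Fin (s + 2 * t) → ℕ := Fin.append (fun _ ↦ 2) (fun _ ↦ 1)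
  have hw : ∀ i, w i = 1 ∨ w i = 2 := Fin.addCases (by simp [w]) (by simp [w])
  have h_sum : ∑ i, w i = 2 * s + 2 * t := by simp [w, Fin.sum_univ_add, mul_comm]
  have h_nDepth (k : ℕ) (hk : 1 ≤ k) (hkm : k ≤ s + t) :
      nDepth K (weightIdeal K w 2) k = if k ≤ s then 1 else 0 :=
    nDepth_weightIdeal_two K hw (Fintype.card_fin _) h_sum (by omega) hk (by omega)
  refine ⟨s + 2 * t, weightIdeal K w 2, isSqfreeMonomialIdeal_sqMonIdeal K _, ?_, ?_, ?_⟩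
  · rw [monGrade_weightIdeal K two_pos hw, h_sum]
    omega
  · intro k hk hks
    rw [h_nDepth k hk (by omega), if_pos hks]
  · intro k hsk hkm
    rw [h_nDepth k (by omega) hkm, if_neg (by omega)]
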